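/- Let H be an (n-k)×n matrix over GF(4) and let M be the 2(n-k)×2(n-k) matrix over GF(2) given by the entrywise trace of [[H H†, ω̄ H H†],[ω H H†, H H†]] (where † is conjugate transpose over GF(4)). Then M is congruent over GF(4) to the block-diagonal matrix H̄ H^T ⊕ H H†, and consequently rank(M) = 2·rank(H H†). -/

import Mathlib

/-- Entrywise trace of GF(4) over GF(2), with values in `ZMod 2`:
`tr x = x + x²` equals `0` or `1` in GF(4). -/
noncomputable def gf4TrToGF2 (x : GaloisField 2 2) : ZMod 2 :=
  open scoped Classical in
  if x + x ^ 2 = 0 then 0 else 1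

/-- Conjugate transpose over GF(4), where conjugation is `x ↦ x²`. -/
noncomputable def gf4Dagger {m n : Type*}
    (A : Matrix m n (GaloisField 2 2)) :
    Matrix n m (GaloisField 2 2) :=
  fun i j => (A j i) ^ 2

/-! Let `v = (1, ω)ᵀ` and let a bar denote the conjugation. Since `ω ω̄ = 1`, the block matrix whose
trace is taken is `v v† ⊗ K` with `K = H H†`, so its trace is
`v v† ⊗ K + v̄ v̄† ⊗ K̄ = B (K̄ ⊕ K) B†` for `B = [v̄ ⊗ 1, v ⊗ 1]`. The matrix `B` is invertible
because `ω` is not fixed by the conjugation, and the rank is unchanged by congruence, by extension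
of scalars and by conjugation. -/

open Matrix

section Rank

theorem finrank_submodule_prod {F V W : Type*} [DivisionRing F] [AddCommGroup V] [Module F V]
    [AddCommGroup W] [Module F W] (p : Submodule F V) (q : Submodule F W)
    [FiniteDimensional F p] [FiniteDimensional F q] :
    Module.finrank F (p.prod q) = Module.finrank F p + Module.finrank F q := by
  have hinj : Function.Injective (p.subtype.prodMap q.subtype) :=
    p.injective_subtype.prodMap q.injective_subtype
  rw [← Module.finrank_prod, ← LinearMap.finrank_range_of_inj hinj, LinearMap.range_prodMap,
    Submodule.range_subtype, Submodule.range_subtype]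

theorem span_range_ringHom_comp_eq {F E ι κ m : Type*} [CommSemiring F] [CommSemiring E]
    (f : F →+* E) {v : ι → m → F} {a : κ → ι}
    (h : Submodule.span F (Set.range (v ∘ a)) = Submodule.span F (Set.range v)) :
    Submodule.span E (Set.range fun k ↦ f ∘ v (a k)) =
      Submodule.span E (Set.range fun i ↦ f ∘ v i) := by
  let := f.toAlgebra
  refine le_antisymm (Submodule.span_mono (Set.range_comp_subset_range a fun i ↦ f ∘ v i)) ?_
  rw [Submodule.span_le, Set.range_subset_iff]
  intro i
  have hle : Submodule.span F (Set.range (v ∘ a)) ≤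
      ((Submodule.span E (Set.range fun k ↦ f ∘ v (a k))).restrictScalars F).comap
        ((Algebra.linearMap F E).compLeft m) :=
    Submodule.span_le.2 (Set.range_subset_iff.2 fun k ↦ Submodule.subset_span ⟨k, rfl⟩)
  exact hle (h ▸ Submodule.subset_span ⟨i, rfl⟩)

variable {F E m n m' n' : Type*} [Field F] [Field E] [Fintype n] [Fintype n']

theorem rank_fromBlocks_zero_zero (A : Matrix m n F) (D : Matrix m' n' F) :
    (fromBlocks A 0 0 D).rank = A.rank + D.rank := by
  let e := LinearEquiv.sumArrowLequivProdArrow n n' F F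
  let e' := LinearEquiv.sumArrowLequivProdArrow m m' F F
  have hconj : (fromBlocks A 0 0 D).mulVecLin =
      e'.symm.toLinearMap ∘ₗ A.mulVecLin.prodMap D.mulVecLin ∘ₗ e.toLinearMap := by
    ext v (i | i) <;> simp [e, e', fromBlocks_mulVec] <;> rfl
  rw [rank, hconj, LinearMap.range_comp, LinearEquiv.finrank_map_eq, LinearEquiv.range_comp,
    LinearMap.range_prodMap, finrank_submodule_prod, rank, rank]

theorem rank_map_ringHom [Finite m] (f : F →+* E) (M : Matrix m n F) :
    (M.map f).rank = M.rank := by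
  let := f.toAlgebra
  obtain ⟨κ, a, ha, hspan, hli⟩ := exists_linearIndependent' F M.col
  have := Fintype.ofInjective a ha
  have hliE : LinearIndependent E fun k ↦ f ∘ M.col (a k) :=
    linearIndependent_algebraMap_comp_iff.2 hli
  rw [rank_eq_finrank_span_cols, rank_eq_finrank_span_cols, ← hspan, finrank_span_eq_card hli,
    ← finrank_span_eq_card hliE, span_range_ringHom_comp_eq f hspan]
  rfl

end Rank

section Congruence

theorem exists_isUnit_mul_mul_star_eq {M : Type*} [Monoid M] [StarMul M] {b : M} (hb : IsUnit b)
    (d : M) : ∃ a, IsUnit a ∧ a * (b * d * star b) * star a = d := by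
  obtain ⟨u, rfl⟩ := hb
  refine ⟨↑u⁻¹, u⁻¹.isUnit, ?_⟩
  rw [mul_assoc, mul_assoc, ← star_mul, Units.inv_mul, star_one, mul_one, Units.inv_mul_cancel_left]

theorem map_star_mul_conjTranspose {R m n : Type*} [CommSemiring R] [StarRing R] [Fintype n]
    (H : Matrix m n R) : (H * Hᴴ).map star = H.map star * Hᵀ :=
  calc (H * Hᴴ).map star = (H * Hᴴ)ᴴᵀ := rfl
    _ = (H * Hᴴ)ᵀ := by rw [isHermitian_mul_conjTranspose_self H]
    _ = H.map star * Hᵀ := transpose_mul H Hᴴ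

variable {R m : Type*} [CommRing R] [StarRing R] [Fintype m] [DecidableEq m]

theorem rank_mul_mul_conjTranspose_of_isUnit {A : Matrix m m R} (hA : IsUnit A)
    (M : Matrix m m R) : (A * M * Aᴴ).rank = M.rank := by
  have hdet := (isUnit_iff_isUnit_det A).1 hA
  have hdet' := (isUnit_iff_isUnit_det Aᴴ).1 ((isUnit_conjTranspose A).2 hA)
  rw [rank_mul_eq_left_of_isUnit_det _ _ hdet', rank_mul_eq_right_of_isUnit_det _ _ hdet]

variable (m) in
/-- The block Vandermonde matrix with nodes `star ω` and `ω`, that is, the Kronecker product of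
`!![1, 1; star ω, ω]` with the identity matrix. It carries out the congruence between
`fromBlocks (K.map star) 0 0 K` and the trace of a block matrix. -/
def conjVandermonde (ω : R) : Matrix (m ⊕ m) (m ⊕ m) R :=
  fromBlocks 1 1 (star ω • 1) (ω • 1)

theorem isUnit_conjVandermonde {ω : R} (hω : IsUnit (ω - star ω)) :
    IsUnit (conjVandermonde m ω) := by
  rw [isUnit_iff_isUnit_det, conjVandermonde, det_fromBlocks_one₁₁, mul_one, ← sub_smul, det_smul,
    det_one, mul_one]
  exact hω.pow _

theorem conjVandermonde_mul_fromBlocks_mul_conjTranspose (ω : R) (K : Matrix m m R) :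
    letI L := fromBlocks K (star ω • K) (ω • K) ((ω * star ω) • K)
    conjVandermonde m ω * fromBlocks (K.map star) 0 0 K * (conjVandermonde m ω)ᴴ =
      L + L.map star := by
  simp only [conjVandermonde, fromBlocks_conjTranspose, fromBlocks_multiply, fromBlocks_map,
    fromBlocks_add]
  congr 1 <;> ext i j <;> simp <;> ring

end Congruence

theorem stmt_13_general {F E m : Type*} [Field F] [Field E] [StarRing E] [Fintype m]
    [DecidableEq m] (φ : F →+* E) (tr : E → F) (htr : ∀ x, φ (tr x) = x + star x)
    {ω : E} (hω : star ω ≠ ω) (K : Matrix m m E) :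
    letI M := (fromBlocks K (star ω • K) (ω • K) ((ω * star ω) • K)).map tr
    (∃ A : Matrix (m ⊕ m) (m ⊕ m) E,
      IsUnit A ∧ A * M.map φ * Aᴴ = fromBlocks (K.map star) 0 0 K) ∧
    M.rank = 2 * K.rank := by
  set L := fromBlocks K (star ω • K) (ω • K) ((ω * star ω) • K) with hL
  have hB : IsUnit (conjVandermonde m ω) :=
    isUnit_conjVandermonde (sub_ne_zero.2 hω.symm).isUnit
  have hM : (L.map tr).map φ =
      conjVandermonde m ω * fromBlocks (K.map star) 0 0 K * (conjVandermonde m ω)ᴴ := by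
    rw [conjVandermonde_mul_fromBlocks_mul_conjTranspose, ← hL]
    ext i j
    exact htr (L i j)
  have hrank_star : (K.map star).rank = K.rank := rank_map_ringHom (starRingEnd E) K
  constructor
  · rw [hM]
    exact exists_isUnit_mul_mul_star_eq hB _
  · rw [← rank_map_ringHom φ, hM, rank_mul_mul_conjTranspose_of_isUnit hB,
      rank_fromBlocks_zero_zero, hrank_star, two_mul]

section GaloisField

/-- The conjugation `x ↦ x ^ p` of the field with `p²` elements as a star operation, so that
`gf4Dagger` is the conjugate transpose of Mathlib. -/
noncomputable instance galoisFieldStarRing (p : ℕ) [Fact p.Prime] :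
    StarRing (GaloisField p 2) where
  star x := x ^ p
  star_involutive x := by
    have := Fintype.ofFinite (GaloisField p 2)
    have hcard : Fintype.card (GaloisField p 2) = p ^ 2 := by
      rw [← Nat.card_eq_fintype_card, GaloisField.card p 2 two_ne_zero]
    change (x ^ p) ^ p = x
    rw [← pow_mul, ← sq, ← hcard, FiniteField.pow_card]
  star_mul x y := by rw [mul_pow, mul_comm]
  star_add x y := add_pow_char x y p

theorem galoisField_star_def (p : ℕ) [Fact p.Prime] (x : GaloisField p 2) : star x = x ^ p := rfl

theorem algebraMap_gf4TrToGF2 (x : GaloisField 2 2) :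
    algebraMap (ZMod 2) (GaloisField 2 2) (gf4TrToGF2 x) = x + star x := by
  have hidem : IsIdempotentElem (x + star x) := by
    rw [IsIdempotentElem, ← sq, ← galoisField_star_def, (IsSelfAdjoint.add_star_self x).star_eq]
  rw [gf4TrToGF2, ← galoisField_star_def]
  split_ifs with h
  · rw [h, map_zero]
  · rw [(IsIdempotentElem.iff_eq_zero_or_one.1 hidem).resolve_left h, map_one]

theorem gf4_star_ne_self {ω : GaloisField 2 2} (hω : ω ^ 2 = ω + 1) : star ω ≠ ω := by
  simp [galoisField_star_def, hω]

theorem gf4_mul_star_eq_one {ω : GaloisField 2 2} (hω : ω ^ 2 = ω + 1) : ω * star ω = 1 := by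
  rw [galoisField_star_def]
  linear_combination (ω + 1) * hω + ω * CharTwo.two_eq_zero (R := GaloisField 2 2)

end GaloisField

theorem stmt_13 (n k : ℕ) (ω : GaloisField 2 2) (hω : ω ^ 2 = ω + 1)
    (H : Matrix (Fin (n - k)) (Fin n) (GaloisField 2 2)) :
    letI φ := algebraMap (ZMod 2) (GaloisField 2 2)
    letI K := H * gf4Dagger H
    letI Hbar := H.map (· ^ 2)
    -- M = entrywise trace of [[HH†, ω̄ HH†],[ω HH†, HH†]]
    letI M : Matrix (Fin (n - k) ⊕ Fin (n - k)) (Fin (n - k) ⊕ Fin (n - k)) (ZMod 2) :=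
      (Matrix.fromBlocks K (ω ^ 2 • K) (ω • K) K).map gf4TrToGF2
    (∃ A : Matrix (Fin (n - k) ⊕ Fin (n - k)) (Fin (n - k) ⊕ Fin (n - k))
        (GaloisField 2 2),
      IsUnit A ∧
      A * M.map φ * gf4Dagger A
        = Matrix.fromBlocks (Hbar * H.transpose) 0 0 K) ∧
    M.rank = 2 * K.rank := by
  have h := stmt_13_general _ gf4TrToGF2 algebraMap_gf4TrToGF2 (gf4_star_ne_self hω) (H * Hᴴ)
  rwa [gf4_mul_star_eq_one hω, one_smul, map_star_mul_conjTranspose] at h
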